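/- Let R be a semiartinian von Neumann regular ring with primitive factors artinian such that σ is a countable ordinal and all proper layers of R are countably generated. Then there exist a right R-module B which is a countable direct product of right ideals of R, an injective right R-module N, and an epimorphism π : B → N such that for every right R-module M the following are equivalent: (1) M is weakly R-projective; (2) the induced map Hom_R(M, π) : Hom_R(M, B) → Hom_R(M, N) is surjective. -/

import Mathlib

set_option synthInstance.maxHeartbeats 1000000
set_option maxHeartbeats 2000000


universe u

open Submodule Function

/-- The socle of a module: the supremum of all simple submodules. -/
def moduleSocle (R : Type*) (M : Type*) [Ring R] [AddCommGroup M] [Module R M] :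
    Submodule R M :=
  sSup {W : Submodule R M | IsSimpleModule R ↥W}

/-- A ring is right semiartinian if every nonzero quotient of the right module `R_R`
has a nonzero socle. -/
def IsRightSemiartinian (R : Type u) [Ring R] : Prop :=
  ∀ I : Submodule Rᵐᵒᵖ R, I ≠ ⊤ → moduleSocle Rᵐᵒᵖ (R ⧸ I) ≠ ⊥

/-- The right socle sequence of a ring: `S_0 = 0`, `S_{α+1}/S_α = Soc(R/S_α)`,
and unions at limits. -/
noncomputable def socleSeq (R : Type u) [Ring R] : Ordinal.{u} → Submodule Rᵐᵒᵖ R :=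
  fun o => Ordinal.limitRecOn o ⊥
    (fun _ S => Submodule.comap S.mkQ (moduleSocle Rᵐᵒᵖ (R ⧸ S)))
    (fun o _ ih => ⨆ (β : Ordinal.{u}) (h : β < o), ih β h)

/-- `S_α`, viewed as a submodule of `S_{α+1}`; the kernel of the `α`-th layer
epimorphism `π_α : S_{α+1} → S_{α+1}/S_α`. -/
noncomputable def layerKer (R : Type u) [Ring R] (α : Ordinal.{u}) :
    Submodule Rᵐᵒᵖ ↥(socleSeq R (α + 1)) :=
  (socleSeq R α).comap (socleSeq R (α + 1)).subtype

/-- The `α`-th layer `L_α = S_{α+1}/S_α` of a ring. -/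
noncomputable abbrev Layer (R : Type u) [Ring R] (α : Ordinal.{u}) :=
  ↥(socleSeq R (α + 1)) ⧸ layerKer R α

/-- A module `M` is weakly `R`-projective if for each `0 < α ≤ σ`, every homomorphism
`f : M → L_α` with finitely generated image factors through the `α`-th layer
epimorphism `π_α : S_{α+1} → L_α`. -/
def WeaklyRProjective (R : Type u) [Ring R] (σ : Ordinal.{u})
    (M : Type u) [AddCommGroup M] [Module Rᵐᵒᵖ M] : Prop :=
  ∀ α : Ordinal.{u}, 0 < α → α ≤ σ →
    ∀ f : M →ₗ[Rᵐᵒᵖ] Layer R α, (LinearMap.range f).FG →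
      ∃ g : M →ₗ[Rᵐᵒᵖ] ↥(socleSeq R (α + 1)), (layerKer R α).mkQ ∘ₗ g = f

/-- A ring is von Neumann regular if each `r` admits `s` with `r * s * r = r`. -/
def IsVNRegular (R : Type u) [Ring R] : Prop :=
  ∀ r : R, ∃ s : R, r * s * r = r

/-- The annihilator of a right `R`-module, as a submodule of the right module `R_R`. -/
def rightAnnihilator (R : Type u) [Ring R] (M : Type u) [AddCommGroup M]
    [Module Rᵐᵒᵖ M] : Submodule Rᵐᵒᵖ R where
  carrier := {r : R | ∀ m : M, MulOpposite.op r • m = 0}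
  add_mem' := by
    intro a b ha hb m
    rw [MulOpposite.op_add, add_smul, ha m, hb m, add_zero]
  zero_mem' := by
    intro m
    rw [MulOpposite.op_zero, zero_smul]
  smul_mem' := by
    intro c r hr m
    have h : MulOpposite.op (c • r) = c * MulOpposite.op r := by
      rw [MulOpposite.smul_eq_mul_unop, MulOpposite.op_mul, MulOpposite.op_unop]
    rw [h, mul_smul, hr m, smul_zero]

/-- A ring has (right) primitive factors artinian if, for each right primitive
(two-sided) ideal `P`, i.e. the annihilator of a simple right module, the factor
`R/P` is (right) artinian. -/
def HasPFA (R : Type u) [Ring R] : Prop :=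
  ∀ (M : Type u) [AddCommGroup M] [Module Rᵐᵒᵖ M], IsSimpleModule Rᵐᵒᵖ M →
    IsArtinian Rᵐᵒᵖ (R ⧸ rightAnnihilator R M)

/-- The property of `(I, N)` asserted in Lemma 11 of the paper: `N` is injective and
there is an epimorphism `π : B → N` from the countable product `B = ∏_{n<ω} I n` of
right ideals such that a module `M` is weakly `R`-projective iff the induced map
`Hom(M, B) → Hom(M, N)` is surjective. -/
def IsWeakProjectivityTest (R : Type u) [Ring R] (σ : Ordinal.{u})
    (I : ℕ → Submodule Rᵐᵒᵖ R) (N : Type u) [AddCommGroup N] [Module Rᵐᵒᵖ N] : Prop :=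
  Module.Injective Rᵐᵒᵖ N ∧
  ∃ π : ((n : ℕ) → ↥(I n)) →ₗ[Rᵐᵒᵖ] N, Function.Surjective π ∧
    ∀ (M : Type u) [AddCommGroup M] [Module Rᵐᵒᵖ M],
      (WeaklyRProjective R σ M ↔
        Function.Surjective fun g : M →ₗ[Rᵐᵒᵖ] ((n : ℕ) → ↥(I n)) => π ∘ₗ g)

/-! A right `V`-ring is a ring whose simple right modules are injective. A regular ring with
primitive factors artinian is of this kind: if `T` is simple with annihilator `P`, then by
regularity a map `J → T` from a right ideal vanishes on `J ∩ P`, so it factors through the image of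
`J` in the semisimple module `R/P` and extends. Over a right `V`-ring the finitely generated
submodules of the layers, being semisimple, are injective, hence so is every product of them. For
such a submodule `T` of `L_α`, the preimage of `T` in `S_{α+1}` is a right ideal, and lifting a map
`M → T` along this preimage is the same as lifting the composite `M → L_α` along `π_α`. As `σ` is
countable and the layers are countably generated, countably many `T` are cofinal, and the product
of the corresponding epimorphisms tests all of them at once. -/

section Lifting

variable {A : Type*} [Ring A] {M : Type*} [AddCommGroup M] [Module A M]

theorem surjective_comp_pi_iff {ι : Type*} {P Q : ι → Type*} [∀ i, AddCommGroup (P i)]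
    [∀ i, Module A (P i)] [∀ i, AddCommGroup (Q i)] [∀ i, Module A (Q i)]
    (ψ : ∀ i, P i →ₗ[A] Q i) :
    (Surjective fun g : M →ₗ[A] ∀ i, P i => LinearMap.pi (fun i => ψ i ∘ₗ LinearMap.proj i) ∘ₗ g) ↔
      ∀ i, Surjective fun g : M →ₗ[A] P i => ψ i ∘ₗ g := by
  classical
  constructor
  · intro h i f
    obtain ⟨g, hg⟩ := h (LinearMap.single A Q i ∘ₗ f)
    refine ⟨LinearMap.proj i ∘ₗ g, LinearMap.ext fun m => ?_⟩
    simpa using congrFun (LinearMap.congr_fun hg m) i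
  · intro h f
    choose g hg using fun i => h i (LinearMap.proj i ∘ₗ f)
    exact ⟨LinearMap.pi g, LinearMap.ext fun m => funext fun i => LinearMap.congr_fun (hg i) m⟩

variable {P Q : Type*} [AddCommGroup P] [Module A P] [AddCommGroup Q] [Module A Q]

theorem surjective_comp_comp_linearEquiv_iff {P' : Type*} [AddCommGroup P'] [Module A P']
    (p : P →ₗ[A] Q) (e : P' ≃ₗ[A] P) :
    (Surjective fun g : M →ₗ[A] P' => (p ∘ₗ e.toLinearMap) ∘ₗ g) ↔
      Surjective fun g : M →ₗ[A] P => p ∘ₗ g :=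
  Surjective.of_comp_iff (fun g : M →ₗ[A] P => p ∘ₗ g) (g := fun g => e.toLinearMap ∘ₗ g)
    fun g => ⟨e.symm.toLinearMap ∘ₗ g, LinearMap.ext fun m => e.apply_symm_apply (g m)⟩

theorem surjective_comp_submoduleComap_iff (p : P →ₗ[A] Q) (T : Submodule A Q) :
    (Surjective fun g : M →ₗ[A] T.comap p => p.submoduleComap T ∘ₗ g) ↔
      ∀ f : M →ₗ[A] Q, LinearMap.range f ≤ T → ∃ g : M →ₗ[A] P, p ∘ₗ g = f := by
  constructor
  · intro h f hf
    obtain ⟨g, hg⟩ := h (f.codRestrict T fun m => hf (LinearMap.mem_range_self f m))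
    exact ⟨(T.comap p).subtype ∘ₗ g,
      LinearMap.ext fun m => congrArg Subtype.val (LinearMap.congr_fun hg m)⟩
  · intro h f
    obtain ⟨g, hg⟩ := h (T.subtype ∘ₗ f)
      ((LinearMap.range_comp_le_range f T.subtype).trans T.range_subtype.le)
    have hpg (m : M) : p (g m) = f m := LinearMap.congr_fun hg m
    exact ⟨g.codRestrict (T.comap p) fun m => mem_comap.2 (hpg m ▸ (f m).2),
      LinearMap.ext fun m => Subtype.ext (hpg m)⟩

end Lifting

section VRing

/-- A left `V`-ring: every simple left module is injective. A ring `R` is a right `V`-ring when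
`Rᵐᵒᵖ` is a left `V`-ring. -/
def IsLeftVRing (A : Type u) [Ring A] : Prop :=
  ∀ (T : Type u) [AddCommGroup T] [Module A T], IsSimpleModule A T → Module.Injective A T

theorem IsLeftVRing.injective_of_isSemisimpleModule {A : Type u} [Ring A] (hA : IsLeftVRing A)
    (T : Type u) [AddCommGroup T] [Module A T] [IsSemisimpleModule A T] [Module.Finite A T] :
    Module.Injective A T := by
  obtain ⟨n, S, e, hS⟩ := IsSemisimpleModule.exists_linearEquiv_fin_dfinsupp A T
  have (i : Fin n) : Module.Injective A (S i) := hA (S i) (hS i)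
  exact ((Module.Baer.of_injective (inferInstanceAs (Module.Injective A (∀ i, S i)))).of_equiv
    (e.trans DFinsupp.linearEquivFunOnFintype).symm).injective

variable {A : Type*} [Ring A] {P Q T : Type*} [AddCommGroup P] [Module A P]
  [AddCommGroup Q] [Module A Q] [AddCommGroup T] [Module A T]

theorem exists_comp_eq_of_ker_le_ker [IsSemisimpleModule A Q] (φ : P →ₗ[A] Q) (f : P →ₗ[A] T)
    (h : LinearMap.ker φ ≤ LinearMap.ker f) : ∃ p : Q →ₗ[A] T, p ∘ₗ φ = f := by
  obtain ⟨p, hp⟩ := IsSemisimpleModule.extension_property ((LinearMap.ker φ).liftQ φ le_rfl)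
    (LinearMap.ker_eq_bot.1 (ker_liftQ_eq_bot _ _ _ le_rfl)) ((LinearMap.ker φ).liftQ f h)
  exact ⟨p, LinearMap.ext fun x => LinearMap.congr_fun hp (Submodule.Quotient.mk x)⟩

theorem IsVNRegular.map_eq_zero_of_mem_annihilator (hA : IsVNRegular A) {J : Ideal A}
    (f : J →ₗ[A] T) (x : J) (hx : (x : A) ∈ Module.annihilator A T) : f x = 0 := by
  obtain ⟨s, hs⟩ := hA x
  have hxsx : ((x : A) * s) • x = x := Subtype.ext hs
  rw [← hxsx, map_smul, mul_smul, Module.mem_annihilator.1 hx]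

theorem IsVNRegular.injective_of_isSemisimpleModule_quotient_annihilator (hA : IsVNRegular A)
    [IsSemisimpleModule A (A ⧸ Module.annihilator A T)] : Module.Injective A T := by
  refine Module.Baer.injective fun J f => ?_
  let q : A →ₗ[A] A ⧸ Module.annihilator A T := (Module.annihilator A T).mkQ
  obtain ⟨p, hp⟩ := exists_comp_eq_of_ker_le_ker (q ∘ₗ J.subtype) f fun x hx =>
    hA.map_eq_zero_of_mem_annihilator f x ((Submodule.Quotient.mk_eq_zero _).1 hx)
  exact ⟨p ∘ₗ q, fun x hx => LinearMap.congr_fun hp ⟨x, hx⟩⟩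

variable (A T) in
theorem isSemisimpleModule_quotient_annihilator [IsSemisimpleModule A T]
    [IsArtinian A (A ⧸ Module.annihilator A T)] :
    IsSemisimpleModule A (A ⧸ Module.annihilator A T) := by
  let φ : A →ₗ[A] T → T := LinearMap.pi (LinearMap.toSpanSingleton A T)
  have hφ : LinearMap.ker φ = Module.annihilator A T := by
    ext a
    simp [φ, Module.mem_annihilator, funext_iff]
  rw [IsArtinian.isSemisimpleModule_iff_jacobson]
  exact Module.jacobson_eq_bot_of_injective ((Module.annihilator A T).liftQ φ hφ.ge)
    (LinearMap.ker_eq_bot.1 (ker_liftQ_eq_bot _ _ _ hφ.le))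
    (Module.jacobson_pi_eq_bot _ _ fun _ => IsSemisimpleModule.jacobson_eq_bot A T)

theorem IsVNRegular.mulOpposite {R : Type*} [Ring R] (hR : IsVNRegular R) : IsVNRegular Rᵐᵒᵖ := by
  intro r
  obtain ⟨s, hs⟩ := hR r.unop
  exact ⟨MulOpposite.op s, MulOpposite.unop_injective (by simpa [mul_assoc] using hs)⟩

variable {R : Type u} [Ring R]

theorem map_opLinearEquiv_rightAnnihilator (T : Type u) [AddCommGroup T] [Module Rᵐᵒᵖ T] :
    (rightAnnihilator R T).map (MulOpposite.opLinearEquiv Rᵐᵒᵖ : R ≃ₗ[Rᵐᵒᵖ] Rᵐᵒᵖ).toLinearMap =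
      Module.annihilator Rᵐᵒᵖ T := by
  ext a
  rw [map_equiv_eq_comap_symm, mem_comap, Module.mem_annihilator]
  rfl

theorem HasPFA.isLeftVRing_mulOpposite (hpfa : HasPFA R) (hR : IsVNRegular R) :
    IsLeftVRing Rᵐᵒᵖ := by
  intro T _ _ hT
  have := hpfa T hT
  have : IsArtinian Rᵐᵒᵖ (Rᵐᵒᵖ ⧸ Module.annihilator Rᵐᵒᵖ T) :=
    isArtinian_of_linearEquiv
      (Submodule.Quotient.equiv _ _ _ (map_opLinearEquiv_rightAnnihilator T))
  have := isSemisimpleModule_quotient_annihilator Rᵐᵒᵖ T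
  exact hR.mulOpposite.injective_of_isSemisimpleModule_quotient_annihilator

end VRing

section CountablyGenerated

theorem exists_countable_cofinal_fg {A M : Type*} [Ring A] [AddCommGroup M] [Module A M]
    {S : Set M} (hS : S.Countable) (hspan : span A S = ⊤) :
    ∃ 𝒯 : Set (Submodule A M), 𝒯.Countable ∧ (∀ T ∈ 𝒯, T.FG) ∧
      ∀ V : Submodule A M, V.FG → ∃ T ∈ 𝒯, V ≤ T := by
  refine ⟨span A '' {F | F.Finite ∧ F ⊆ S}, (Set.countable_ofPred_finite_subset hS).image _, ?_, ?_⟩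
  · rintro _ ⟨F, ⟨hF, -⟩, rfl⟩
    exact fg_span hF
  · rintro _ ⟨V, rfl⟩
    obtain ⟨F, hFS, hVF⟩ := subset_span_finite_of_subset_span (R := A) (s := S) (t := V)
      (hspan ▸ Set.subset_univ _)
    exact ⟨span A F, ⟨F, ⟨F.finite_toSet, hFS⟩, rfl⟩, span_le.2 hVF⟩

theorem countable_Iic_of_card_le_aleph0 {σ : Ordinal.{u}} (hσ : σ.card ≤ Cardinal.aleph0) :
    (Set.Iic σ).Countable := by
  have hIio : (Set.Iio σ).Countable := by
    rw [← Cardinal.le_aleph0_iff_set_countable, Cardinal.mk_Iio_ordinal]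
    exact Cardinal.lift_le_aleph0.2 hσ
  exact Set.Iio_insert (a := σ) ▸ hIio.insert σ

end CountablyGenerated

section Layers

variable {R : Type u} [Ring R] {α σ : Ordinal.{u}}

theorem isSemisimpleModule_moduleSocle (A M : Type*) [Ring A] [AddCommGroup M] [Module A M] :
    IsSemisimpleModule A (moduleSocle A M) := by
  rw [moduleSocle, sSup_eq_iSup]
  exact isSemisimpleModule_biSup_of_isSemisimpleModule_submodule (p := id)
    fun W (_ : IsSimpleModule A W) => inferInstanceAs (IsSemisimpleModule A W)

variable (R) in
theorem socleSeq_zero : socleSeq R 0 = ⊥ := by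
  rw [socleSeq, Ordinal.limitRecOn_zero]

variable (R α) in
theorem socleSeq_add_one :
    socleSeq R (α + 1) = (moduleSocle Rᵐᵒᵖ (R ⧸ socleSeq R α)).comap (socleSeq R α).mkQ := by
  unfold socleSeq
  rw [Ordinal.limitRecOn_add_one]

variable (R α) in
theorem isSemisimpleModule_layer : IsSemisimpleModule Rᵐᵒᵖ (Layer R α) := by
  have := isSemisimpleModule_moduleSocle Rᵐᵒᵖ (R ⧸ socleSeq R α)
  let f : socleSeq R (α + 1) →ₗ[Rᵐᵒᵖ] moduleSocle Rᵐᵒᵖ (R ⧸ socleSeq R α) :=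
    ((socleSeq R α).mkQ ∘ₗ (socleSeq R (α + 1)).subtype).codRestrict _ fun x =>
      (socleSeq_add_one R α).le x.2
  have hf : LinearMap.ker f = layerKer R α := by
    rw [layerKer, LinearMap.ker_codRestrict, LinearMap.ker_comp, ker_mkQ]
  exact IsSemisimpleModule.of_injective ((layerKer R α).liftQ f hf.ge)
    (LinearMap.ker_eq_bot.1 (ker_liftQ_eq_bot _ _ _ hf.le))

theorem exists_countable_span_layer_eq_top (hσ : socleSeq R (σ + 1) = ⊤) :
    ∃ S : Set (Layer R σ), S.Countable ∧ span Rᵐᵒᵖ S = ⊤ := by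
  let one : socleSeq R (σ + 1) := ⟨1, hσ ▸ mem_top⟩
  have hone (x : socleSeq R (σ + 1)) : MulOpposite.op (x : R) • one = x :=
    Subtype.ext (one_mul (x : R))
  refine ⟨{(layerKer R σ).mkQ one}, Set.countable_singleton _, eq_top_iff.2 fun y _ => ?_⟩
  obtain ⟨x, rfl⟩ := (layerKer R σ).mkQ_surjective y
  exact mem_span_singleton.2 ⟨MulOpposite.op (x : R), by rw [← map_smul, hone]⟩

theorem WeaklyRProjective.exists_lift {M : Type u} [AddCommGroup M] [Module Rᵐᵒᵖ M]
    (hM : WeaklyRProjective R σ M) (hα : α ≤ σ) (f : M →ₗ[Rᵐᵒᵖ] Layer R α)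
    (hf : (LinearMap.range f).FG) :
    ∃ g : M →ₗ[Rᵐᵒᵖ] socleSeq R (α + 1), (layerKer R α).mkQ ∘ₗ g = f := by
  rcases eq_zero_or_pos α with rfl | hpos
  · have hker : layerKer R 0 = ⊥ := by
      rw [layerKer, socleSeq_zero, comap_bot, ker_subtype]
    let e := (layerKer R 0).quotEquivOfEqBot hker
    exact ⟨e.toLinearMap ∘ₗ f, LinearMap.ext fun m => e.symm_apply_apply (f m)⟩
  · exact hM α hpos hα f hf

/-- The preimage in `S_{α+1}` of a submodule `T` of the layer `L_α`, as a right ideal of `R`. -/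
noncomputable def layerPreimage (T : Submodule Rᵐᵒᵖ (Layer R α)) : Submodule Rᵐᵒᵖ R :=
  (T.comap (layerKer R α).mkQ).map (socleSeq R (α + 1)).subtype

/-- The restriction of the layer epimorphism `π_α` to an epimorphism from the right ideal
`layerPreimage T` onto `T`. -/
noncomputable def layerPreimageMap (T : Submodule Rᵐᵒᵖ (Layer R α)) : layerPreimage T →ₗ[Rᵐᵒᵖ] T :=
  (layerKer R α).mkQ.submoduleComap T ∘ₗ
    ((socleSeq R (α + 1)).equivSubtypeMap (T.comap (layerKer R α).mkQ)).symm.toLinearMap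

theorem layerPreimageMap_surjective (T : Submodule Rᵐᵒᵖ (Layer R α)) :
    Surjective (layerPreimageMap T) :=
  (LinearMap.submoduleComap_surjective_of_surjective _ T (mkQ_surjective _)).comp
    (LinearEquiv.surjective _)

theorem surjective_comp_layerPreimageMap_iff {M : Type*} [AddCommGroup M] [Module Rᵐᵒᵖ M]
    (T : Submodule Rᵐᵒᵖ (Layer R α)) :
    (Surjective fun g : M →ₗ[Rᵐᵒᵖ] layerPreimage T => layerPreimageMap T ∘ₗ g) ↔
      ∀ f : M →ₗ[Rᵐᵒᵖ] Layer R α, LinearMap.range f ≤ T →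
        ∃ g : M →ₗ[Rᵐᵒᵖ] socleSeq R (α + 1), (layerKer R α).mkQ ∘ₗ g = f :=
  (surjective_comp_comp_linearEquiv_iff _ _).trans (surjective_comp_submoduleComap_iff _ T)

end Layers

section Exhaustion

variable {R : Type u} [Ring R] {σ : Ordinal.{u}} {ι : Type*}
  {t : ι → Σ α : Ordinal.{u}, Submodule Rᵐᵒᵖ (Layer R α)}

/-- A family of finitely generated submodules of the layers `L_α`, `α ≤ σ`, which is cofinal among
the finitely generated submodules of each `L_α` with `0 < α ≤ σ`. Submodules of `L_0` are allowed in
order that such a family can be indexed by `ℕ` even if `σ = 0`. -/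
structure IsLayerExhaustion (σ : Ordinal.{u})
    (t : ι → Σ α : Ordinal.{u}, Submodule Rᵐᵒᵖ (Layer R α)) : Prop where
  le : ∀ i, (t i).1 ≤ σ
  fg : ∀ i, (t i).2.FG
  exists_ge : ∀ α, 0 < α → α ≤ σ → ∀ V : Submodule Rᵐᵒᵖ (Layer R α), V.FG →
    ∃ i T, t i = ⟨α, T⟩ ∧ V ≤ T

theorem exists_isLayerExhaustion (hσ : σ.card ≤ Cardinal.aleph0)
    (hlayers : ∀ α : Ordinal.{u}, 0 < α → α ≤ σ →
      ∃ S : Set (Layer R α), S.Countable ∧ span Rᵐᵒᵖ S = ⊤) :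
    ∃ t : ℕ → Σ α : Ordinal.{u}, Submodule Rᵐᵒᵖ (Layer R α), IsLayerExhaustion σ t := by
  have hcofinal (α : Set.Ioc 0 σ) : ∃ 𝒯 : Set (Submodule Rᵐᵒᵖ (Layer R α)), 𝒯.Countable ∧
      (∀ T ∈ 𝒯, T.FG) ∧ ∀ V : Submodule Rᵐᵒᵖ (Layer R α), V.FG → ∃ T ∈ 𝒯, V ≤ T := by
    obtain ⟨S, hS, hspan⟩ := hlayers α α.2.1 α.2.2
    exact exists_countable_cofinal_fg hS hspan
  choose 𝒯 hcount hfg hge using hcofinal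
  have : Countable (Set.Ioc 0 σ) :=
    ((countable_Iic_of_card_le_aleph0 hσ).mono fun _ h => h.2).to_subtype
  let 𝒮 : Set (Σ α : Ordinal.{u}, Submodule Rᵐᵒᵖ (Layer R α)) :=
    insert ⟨0, ⊥⟩ (⋃ α : Set.Ioc 0 σ, Sigma.mk α.1 '' 𝒯 α)
  have h𝒮 : 𝒮.Countable := (Set.countable_iUnion fun α => (hcount α).image _).insert _
  have h𝒮_le_fg (p) (hp : p ∈ 𝒮) : p.1 ≤ σ ∧ p.2.FG := by
    rcases hp with rfl | hp
    · exact ⟨zero_le, fg_bot⟩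
    · obtain ⟨α, T, hT, rfl⟩ := Set.mem_iUnion.1 hp
      exact ⟨α.2.2, hfg α T hT⟩
  obtain ⟨t, ht⟩ := h𝒮.exists_eq_range (Set.insert_nonempty _ _)
  have ht_mem (i : ℕ) : t i ∈ 𝒮 := ht ▸ Set.mem_range_self i
  refine ⟨t, fun i => (h𝒮_le_fg _ (ht_mem i)).1, fun i => (h𝒮_le_fg _ (ht_mem i)).2,
    fun α h0 hα V hV => ?_⟩
  obtain ⟨T, hT, hVT⟩ := hge ⟨α, h0, hα⟩ V hV
  obtain ⟨i, hi⟩ : ⟨α, T⟩ ∈ Set.range t :=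
    ht ▸ Or.inr (Set.mem_iUnion.2 ⟨⟨α, h0, hα⟩, T, hT, rfl⟩)
  exact ⟨i, T, hi, hVT⟩

theorem IsLayerExhaustion.weaklyRProjective_iff (ht : IsLayerExhaustion σ t) (M : Type u)
    [AddCommGroup M] [Module Rᵐᵒᵖ M] :
    WeaklyRProjective R σ M ↔ ∀ i, Surjective fun g : M →ₗ[Rᵐᵒᵖ] layerPreimage (t i).2 =>
      layerPreimageMap (t i).2 ∘ₗ g := by
  simp only [surjective_comp_layerPreimageMap_iff]
  constructor
  · intro hM i f hf
    have := isSemisimpleModule_layer R (t i).1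
    have : Module.Finite Rᵐᵒᵖ (t i).2 := Module.Finite.iff_fg.2 (ht.fg i)
    exact hM.exists_lift (ht.le i) f (.of_le_of_isNoetherian hf)
  · intro h α h0 hα f hf
    obtain ⟨i, T, hi, hfT⟩ := ht.exists_ge α h0 hα _ hf
    have hT := h i
    rw [hi] at hT
    exact hT f hfT

-- Instance search cannot find the group structures on the factors of `∀ i, (t i).2`, where
-- `(t i).2` is a submodule of a layer whose index varies with `i`, without this shortcut.
noncomputable instance {α : Ordinal.{u}} (T : Submodule Rᵐᵒᵖ (Layer R α)) :
    AddCommGroup T :=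
  T.addCommGroup

theorem IsLayerExhaustion.injective_pi (ht : IsLayerExhaustion σ t) (hR : IsLeftVRing Rᵐᵒᵖ) :
    Module.Injective Rᵐᵒᵖ (∀ i, (t i).2) := by
  have (i : ι) : Module.Injective Rᵐᵒᵖ (t i).2 := by
    have := isSemisimpleModule_layer R (t i).1
    have : Module.Finite Rᵐᵒᵖ (t i).2 := Module.Finite.iff_fg.2 (ht.fg i)
    exact hR.injective_of_isSemisimpleModule (t i).2
  infer_instance

theorem IsLayerExhaustion.isWeakProjectivityTest
    {t : ℕ → Σ α : Ordinal.{u}, Submodule Rᵐᵒᵖ (Layer R α)} (ht : IsLayerExhaustion σ t)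
    (hR : IsLeftVRing Rᵐᵒᵖ) :
    IsWeakProjectivityTest R σ (fun n => layerPreimage (t n).2) (∀ n, (t n).2) := by
  refine ⟨ht.injective_pi hR,
    LinearMap.pi fun n => layerPreimageMap (t n).2 ∘ₗ LinearMap.proj n, ?_, fun M _ _ => ?_⟩
  · exact Surjective.piMap fun n => layerPreimageMap_surjective (t n).2
  · exact (ht.weaklyRProjective_iff M).trans
      (surjective_comp_pi_iff fun n => layerPreimageMap (t n).2).symm

end Exhaustion

theorem exists_weak_projectivity_test_general (R : Type u) [Ring R] (hR : IsLeftVRing Rᵐᵒᵖ)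
    (σ : Ordinal.{u}) (hσ : IsLeast {o : Ordinal.{u} | socleSeq R o = ⊤} (σ + 1))
    (hσc : σ.card ≤ Cardinal.aleph0)
    (hlayers : ∀ α : Ordinal.{u}, 0 < α → α < σ →
      ∃ S : Set (Layer R α), S.Countable ∧ Submodule.span Rᵐᵒᵖ S = ⊤) :
    ∃ (I : ℕ → Submodule Rᵐᵒᵖ R) (N : Type u) (i₁ : AddCommGroup N)
      (i₂ : @Module Rᵐᵒᵖ N _ i₁.toAddCommMonoid),
      @IsWeakProjectivityTest R _ σ I N i₁ i₂ := by
  have hlayers_le (α : Ordinal.{u}) (h0 : 0 < α) (hα : α ≤ σ) :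
      ∃ S : Set (Layer R α), S.Countable ∧ span Rᵐᵒᵖ S = ⊤ := by
    rcases hα.lt_or_eq with hlt | rfl
    · exact hlayers α h0 hlt
    · exact exists_countable_span_layer_eq_top hσ.1
  obtain ⟨t, ht⟩ := exists_isLayerExhaustion hσc hlayers_le
  exact ⟨_, _, _, _, ht.isWeakProjectivityTest hR⟩

/-- Lemma 11 of the paper: over a semiartinian von Neumann regular
ring `R` with primitive factors artinian such that `σ` is countable and all proper
layers are countably generated, there is a single epimorphism `π : B → N`, where `B` is
a countable direct product of right ideals of `R` and `N` is injective, testing the weak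
`R`-projectivity of every module. -/
theorem exists_weak_projectivity_test (R : Type u) [Ring R]
    (hsa : IsRightSemiartinian R) (hvnr : IsVNRegular R) (hpfa : HasPFA R)
    (σ : Ordinal.{u}) (hσ : IsLeast {o : Ordinal.{u} | socleSeq R o = ⊤} (σ + 1))
    (hσc : σ.card ≤ Cardinal.aleph0)
    (hlayers : ∀ α : Ordinal.{u}, 0 < α → α < σ →
      ∃ S : Set (Layer R α), S.Countable ∧ Submodule.span Rᵐᵒᵖ S = ⊤) :
    ∃ (I : ℕ → Submodule Rᵐᵒᵖ R) (N : Type u) (i₁ : AddCommGroup N)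
      (i₂ : @Module Rᵐᵒᵖ N _ i₁.toAddCommMonoid),
      @IsWeakProjectivityTest R _ σ I N i₁ i₂ := by
  exact exists_weak_projectivity_test_general R (hpfa.isLeftVRing_mulOpposite hvnr) σ hσ hσc
    hlayers
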